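/- Let r ≤ min(p, q) and let U ∈ ℂ^{p×r}, V ∈ ℂ^{q×r} have orthonormal columns (UᴴU = I_r and VᴴV = I_r). Then the linear map 𝓜 : Σ ↦ Σ − β Uᴴ(𝓗(𝓛(𝓗*(UΣVᴴ))))V on ℂ^{r×r} is positive definite with smallest eigenvalue at least α/(α + βm): for every Σ ∈ ℂ^{r×r}, Re tr(Σᴴ · 𝓜(Σ)) ≥ (α/(α + βm)) ‖Σ‖_F²; in particular 𝓜 is invertible. -/

import Mathlib

open scoped BigOperators

namespace LPPG

/-- The Hankel operator. -/
noncomputable def hankel (p q n : ℕ) (hn : p + q = n + 1) (x : Fin n → ℂ) :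
    Matrix (Fin p) (Fin q) ℂ :=
  fun i j => x ⟨i.1 + j.1, by have hi := i.2; have hj := j.2; omega⟩

/-- The adjoint `𝓗*` of the Hankel operator. -/
noncomputable def hankelAdj (p q n : ℕ) (X : Matrix (Fin p) (Fin q) ℂ) : Fin n → ℂ :=
  fun a => ∑ i : Fin p, ∑ j : Fin q, if (i : ℕ) + (j : ℕ) = (a : ℕ) then X i j else 0

/-- The antidiagonal count `w_a`. -/
def w (p q : ℕ) (a : ℕ) : ℕ :=
  (Finset.univ.filter (fun ij : Fin p × Fin q => (ij.1 : ℕ) + (ij.2 : ℕ) = a)).card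

/-- The entrywise operator `𝓛`. -/
noncomputable def Lop (p q n : ℕ) (α β : ℝ) (Ω : Finset (Fin n)) (x : Fin n → ℂ) : Fin n → ℂ :=
  fun a => x a / ((α : ℂ) + (if a ∈ Ω then 1 else 0) + (β : ℂ) * (w p q (a : ℕ) : ℂ))

/-- Real Frobenius inner product `Re tr(Aᴴ B)`. -/
noncomputable def frobInner (p' q' : ℕ) (A B : Matrix (Fin p') (Fin q') ℂ) : ℝ :=
  (∑ i : Fin p', ∑ j : Fin q', (starRingEnd ℂ) (A i j) * B i j).re

/-- The map `𝓜 : Σ ↦ Σ − β Uᴴ(𝓗(𝓛(𝓗*(UΣVᴴ))))V` on `ℂ^{r×r}`. -/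
noncomputable def Mop (p q n r : ℕ) (hn : p + q = n + 1) (α β : ℝ) (Ω : Finset (Fin n))
    (U : Matrix (Fin p) (Fin r) ℂ) (V : Matrix (Fin q) (Fin r) ℂ)
    (S : Matrix (Fin r) (Fin r) ℂ) : Matrix (Fin r) (Fin r) ℂ :=
  S - β • (U.conjTranspose
      * hankel p q n hn (Lop p q n α β Ω (hankelAdj p q n (U * S * V.conjTranspose)))
      * V)

theorem frobInner_eq_trace (p' q' : ℕ) (A B : Matrix (Fin p') (Fin q') ℂ) :
    frobInner p' q' A B = (A.conjTranspose * B).trace.re := by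
  unfold frobInner
  rw [Finset.sum_comm]
  simp [Matrix.trace, Matrix.mul_apply]

theorem frobInner_self (p' q' : ℕ) (A : Matrix (Fin p') (Fin q') ℂ) :
    frobInner p' q' A A = ∑ i, ∑ j, ‖A i j‖ ^ 2 := by
  unfold frobInner
  rw [Complex.re_sum]
  refine Finset.sum_congr rfl fun i _ => ?_
  rw [Complex.re_sum]
  refine Finset.sum_congr rfl fun j _ => ?_
  rw [Complex.conj_mul']
  norm_cast

theorem w_le (p q a : ℕ) : w p q a ≤ min p q := by
  unfold w
  refine le_min ?_ ?_
  · have h := Finset.card_le_card_of_injOn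
      (s := Finset.univ.filter (fun ij : Fin p × Fin q => (ij.1 : ℕ) + (ij.2 : ℕ) = a))
      (t := (Finset.univ : Finset (Fin p))) Prod.fst (by simp [Set.MapsTo]) (by
        rintro ⟨x1, x2⟩ hx ⟨y1, y2⟩ hy h
        simp at hx hy h
        ext <;> simp <;> omega)
    simpa using h
  · have h := Finset.card_le_card_of_injOn
      (s := Finset.univ.filter (fun ij : Fin p × Fin q => (ij.1 : ℕ) + (ij.2 : ℕ) = a))
      (t := (Finset.univ : Finset (Fin q))) Prod.snd (by simp [Set.MapsTo]) (by
        rintro ⟨x1, x2⟩ hx ⟨y1, y2⟩ hy h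
        simp at hx hy h
        ext <;> simp <;> omega)
    simpa using h

/-- Cauchy-Schwarz on one antidiagonal. -/
theorem hankelAdj_sq_le (p q n : ℕ) (X : Matrix (Fin p) (Fin q) ℂ) (a : Fin n) :
    ‖hankelAdj p q n X a‖ ^ 2 ≤ (w p q a : ℝ) *
      ∑ i : Fin p, ∑ j : Fin q, if (i : ℕ) + (j : ℕ) = (a : ℕ) then ‖X i j‖ ^ 2 else 0 := by
  unfold hankelAdj w
  rw [← Fintype.sum_prod_type' (f := fun (i : Fin p) (j : Fin q) =>
      if (i : ℕ) + (j : ℕ) = (a : ℕ) then X i j else 0),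
    ← Fintype.sum_prod_type' (f := fun (i : Fin p) (j : Fin q) =>
      if (i : ℕ) + (j : ℕ) = (a : ℕ) then ‖X i j‖ ^ 2 else 0),
    ← Finset.sum_filter, ← Finset.sum_filter]
  refine le_trans (pow_le_pow_left₀ (norm_nonneg _) (norm_sum_le _ _) 2) ?_
  exact sq_sum_le_card_mul_sum_sq

theorem sum_antidiag {M : Type*} [AddCommMonoid M] (p q n : ℕ) (hn : p + q = n + 1)
    (f : Fin n → Fin p → Fin q → M) :
    ∑ a : Fin n, ∑ i : Fin p, ∑ j : Fin q,
      (if (i : ℕ) + (j : ℕ) = (a : ℕ) then f a i j else 0)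
      = ∑ i : Fin p, ∑ j : Fin q,
        f ⟨i.1 + j.1, by have hi := i.2; have hj := j.2; omega⟩ i j := by
  rw [Finset.sum_comm]
  refine Finset.sum_congr rfl fun i _ => ?_
  rw [Finset.sum_comm]
  refine Finset.sum_congr rfl fun j _ => ?_
  have hi := i.2
  have hj := j.2
  rw [Finset.sum_eq_single (⟨i.1 + j.1, by omega⟩ : Fin n)]
  · simp
  · intro b _ hb
    rw [if_neg]
    intro h
    exact hb (Fin.ext h.symm)
  · simp

theorem frobInner_hankel (p q n : ℕ) (hn : p + q = n + 1) (X : Matrix (Fin p) (Fin q) ℂ)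
    (y : Fin n → ℂ) :
    frobInner p q X (hankel p q n hn y)
      = (∑ a, (starRingEnd ℂ) (hankelAdj p q n X a) * y a).re := by
  unfold frobInner hankel hankelAdj
  rw [← sum_antidiag p q n hn (fun a i j => (starRingEnd ℂ) (X i j) * y a)]
  congr 1
  refine Finset.sum_congr rfl fun a _ => ?_
  rw [map_sum, Finset.sum_mul]
  refine Finset.sum_congr rfl fun i _ => ?_
  rw [map_sum, Finset.sum_mul]
  refine Finset.sum_congr rfl fun j _ => ?_
  split_ifs <;> simp

theorem key_bound (p q n : ℕ) (hn : p + q = n + 1)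
    (α β : ℝ) (hα : 0 < α) (hβ : 0 < β) (Ω : Finset (Fin n)) (X : Matrix (Fin p) (Fin q) ℂ) :
    β * frobInner p q X (hankel p q n hn (Lop p q n α β Ω (hankelAdj p q n X)))
      ≤ (1 - α / (α + β * (min p q : ℝ))) * ∑ i, ∑ j, ‖X i j‖ ^ 2 := by
  have h1 := sum_antidiag p q n hn (fun _ i j => ‖X i j‖ ^ 2)
  rw [frobInner_hankel, ← h1, Complex.re_sum, Finset.mul_sum, Finset.mul_sum]
  refine Finset.sum_le_sum fun a _ => ?_
  have hcs := hankelAdj_sq_le p q n X a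
  set P := ∑ i : Fin p, ∑ j : Fin q,
    if (i : ℕ) + (j : ℕ) = (a : ℕ) then ‖X i j‖ ^ 2 else 0 with hP
  have hP0 : 0 ≤ P := by
    refine Finset.sum_nonneg fun i _ => Finset.sum_nonneg fun j _ => ?_
    split_ifs <;> positivity
  have hw : (w p q a : ℝ) ≤ min (p : ℝ) q := by exact_mod_cast w_le p q a
  have hw0 : (0 : ℝ) ≤ w p q a := by positivity
  set W : ℝ := ((w p q a : ℕ) : ℝ) with hW
  set m : ℝ := min (p : ℝ) q with hm
  set c : ℝ := if a ∈ Ω then 1 else 0 with hc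
  have hc0 : 0 ≤ c := by rw [hc]; split_ifs <;> norm_num
  set z := hankelAdj p q n X a with hz
  have e : ((starRingEnd ℂ) z * Lop p q n α β Ω (hankelAdj p q n X) a).re
      = ‖z‖ ^ 2 / (α + c + β * W) := by
    unfold Lop
    rw [← hz, ← mul_div_assoc, Complex.conj_mul']
    have : ((α : ℂ) + (if a ∈ Ω then 1 else 0) + (β : ℂ) * (w p q (a : ℕ) : ℂ))
        = ((α + c + β * W : ℝ) : ℂ) := by
      rw [hc, hW]; split_ifs <;> push_cast <;> rfl
    rw [this]
    norm_cast
  rw [e]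
  have hβW : 0 ≤ β * W := by positivity
  have hm0 : 0 ≤ m := hw0.trans hw
  have hβm : 0 ≤ β * m := by positivity
  have hle : β * W ≤ β * m := by gcongr
  calc β * (‖z‖ ^ 2 / (α + c + β * W)) ≤ β * ((W * P) / (α + β * W)) := by
        gcongr
        linarith
    _ = (1 - α / (α + β * W)) * P := by field_simp; ring
    _ ≤ (1 - α / (α + β * m)) * P := by gcongr

theorem Mop_lower
    (p q n r : ℕ) (hn : p + q = n + 1)
    (α β : ℝ) (hα : 0 < α) (hβ : 0 < β) (Ω : Finset (Fin n))
    (U : Matrix (Fin p) (Fin r) ℂ) (V : Matrix (Fin q) (Fin r) ℂ)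
    (hU : U.conjTranspose * U = 1) (hV : V.conjTranspose * V = 1)
    (S : Matrix (Fin r) (Fin r) ℂ) :
    (α / (α + β * (min p q : ℝ))) * ∑ i : Fin r, ∑ j : Fin r, ‖S i j‖ ^ 2
          ≤ frobInner r r S (Mop p q n r hn α β Ω U V S) := by
  have hk := key_bound p q n hn α β hα hβ Ω (U * S * V.conjTranspose)
  have hadj : ∀ H : Matrix (Fin p) (Fin q) ℂ,
      frobInner r r S (U.conjTranspose * H * V)
        = frobInner p q (U * S * V.conjTranspose) H := by
    intro H
    rw [frobInner_eq_trace, frobInner_eq_trace]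
    simp only [Matrix.conjTranspose_mul, Matrix.conjTranspose_conjTranspose]
    rw [Matrix.mul_assoc V, Matrix.trace_mul_comm V]
    simp only [Matrix.mul_assoc]
  have hnorm : frobInner p q (U * S * V.conjTranspose) (U * S * V.conjTranspose)
      = frobInner r r S S := by
    rw [← hadj]
    congr 1
    calc _ = (U.conjTranspose * U) * S * (V.conjTranspose * V) := by
            simp only [Matrix.mul_assoc]
      _ = S := by rw [hU, hV]; simp
  rw [← frobInner_self, hnorm, ← hadj] at hk
  have hsub : frobInner r r S (Mop p q n r hn α β Ω U V S) = frobInner r r S S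
      - β * frobInner r r S (U.conjTranspose
      * hankel p q n hn (Lop p q n α β Ω (hankelAdj p q n (U * S * V.conjTranspose))) * V) := by
    simp only [frobInner_eq_trace]
    unfold Mop
    rw [Matrix.mul_sub, Matrix.trace_sub, Matrix.mul_smul, Matrix.trace_smul, Complex.sub_re,
      Complex.smul_re, smul_eq_mul]
  rw [hsub, ← frobInner_self]
  linarith

theorem hankelAdj_add (p q n : ℕ) (X Y : Matrix (Fin p) (Fin q) ℂ) :
    hankelAdj p q n (X + Y) = hankelAdj p q n X + hankelAdj p q n Y := by
  funext a
  simp only [hankelAdj, Pi.add_apply, ← Finset.sum_add_distrib]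
  refine Finset.sum_congr rfl fun i _ => Finset.sum_congr rfl fun j _ => ?_
  split_ifs <;> simp

theorem hankelAdj_smul (p q n : ℕ) (c : ℂ) (X : Matrix (Fin p) (Fin q) ℂ) :
    hankelAdj p q n (c • X) = c • hankelAdj p q n X := by
  funext a
  simp [hankelAdj, Finset.mul_sum]

/-- `𝓜` as a linear map. -/
noncomputable def MopLin (p q n r : ℕ) (hn : p + q = n + 1) (α β : ℝ) (Ω : Finset (Fin n))
    (U : Matrix (Fin p) (Fin r) ℂ) (V : Matrix (Fin q) (Fin r) ℂ) :
    Matrix (Fin r) (Fin r) ℂ →ₗ[ℂ] Matrix (Fin r) (Fin r) ℂ where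
  toFun := Mop p q n r hn α β Ω U V
  map_add' S T := by
    have h : ∀ x y : Fin n → ℂ, hankel p q n hn (Lop p q n α β Ω (x + y))
        = hankel p q n hn (Lop p q n α β Ω x) + hankel p q n hn (Lop p q n α β Ω y) := by
      intro x y
      ext i j
      simp [hankel, Lop, add_div]
    unfold Mop
    rw [Matrix.mul_add, Matrix.add_mul, hankelAdj_add, h, Matrix.mul_add, Matrix.add_mul,
      smul_add]
    abel
  map_smul' c S := by
    have h : ∀ x : Fin n → ℂ, hankel p q n hn (Lop p q n α β Ω (c • x))
        = c • hankel p q n hn (Lop p q n α β Ω x) := by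
      intro x
      ext i j
      simp [hankel, Lop, mul_div_assoc]
    unfold Mop
    rw [Matrix.mul_smul, Matrix.smul_mul, hankelAdj_smul, h, Matrix.mul_smul, Matrix.smul_mul,
      smul_comm, RingHom.id_apply, smul_sub]

/-- if `U, V` have orthonormal columns and `r ≤ min(p,q)`, then
`𝓜` is positive definite with smallest eigenvalue at least `α/(α + βm)`:
`Re tr(Σᴴ 𝓜(Σ)) ≥ (α/(α + βm))‖Σ‖_F²` for every `Σ`; in particular `𝓜` is
invertible. -/
theorem Mop_positive_definite
    (p q n r : ℕ) (hp : 0 < p) (hq : 0 < q) (hn : p + q = n + 1)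
    (hr : r ≤ min p q)
    (α β : ℝ) (hα : 0 < α) (hβ : 0 < β) (Ω : Finset (Fin n))
    (U : Matrix (Fin p) (Fin r) ℂ) (V : Matrix (Fin q) (Fin r) ℂ)
    (hU : U.conjTranspose * U = 1) (hV : V.conjTranspose * V = 1) :
    (∀ S : Matrix (Fin r) (Fin r) ℂ,
        (α / (α + β * (min p q : ℝ))) * ∑ i : Fin r, ∑ j : Fin r, ‖S i j‖ ^ 2
          ≤ frobInner r r S (Mop p q n r hn α β Ω U V S)) ∧
    Function.Bijective (Mop p q n r hn α β Ω U V) := by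
  have hlow := Mop_lower p q n r hn α β hα hβ Ω U V hU hV
  refine ⟨hlow, ?_⟩
  have hinj : Function.Injective (MopLin p q n r hn α β Ω U V) := by
    rw [injective_iff_map_eq_zero]
    intro S hS
    have h := hlow S
    have hS' : Mop p q n r hn α β Ω U V S = 0 := hS
    have hm : (0 : ℝ) ≤ min (p : ℝ) q := by positivity
    have hpos : 0 < α / (α + β * (min p q : ℝ)) := by positivity
    have h0 : frobInner r r S 0 = 0 := by simp [frobInner]
    rw [hS', h0] at h
    have hsum : ∑ i : Fin r, ∑ j : Fin r, ‖S i j‖ ^ 2 = 0 := by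
      refine le_antisymm (nonpos_of_mul_nonpos_right h hpos) (by positivity)
    ext i j
    rw [Finset.sum_eq_zero_iff_of_nonneg (fun i _ => by positivity)] at hsum
    have h2 := hsum i (Finset.mem_univ i)
    rw [Finset.sum_eq_zero_iff_of_nonneg (fun i _ => by positivity)] at h2
    simpa using h2 j (Finset.mem_univ j)
  exact ⟨hinj, LinearMap.injective_iff_surjective.mp hinj⟩

end LPPG
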